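/- Let (a_n) be a sequence of real numbers with a_n ~ K·ρⁿ·n^α as n → ∞ for constants K > 0, ρ > 0 and α < -1 irrational. Then the power series Σ a_n tⁿ is not algebraic over ℚ(t). -/

import Mathlib

/-!
The operator `θ = X · d/dX` multiplies the `n`-th coefficient of a power series by `n` and, being a
derivation that preserves polynomials, maps algebraic series to algebraic series. Applying it often
enough raises the exponent `α` above `-1` and keeps it irrational. Comparison with the binomial
series of `(1 - x) ^ (-β)`, `β = α + 1 > 0`, then shows that the sum of the series at `x / ρ` has
the exact order `(1 - x) ^ (-β)` as `x → 1⁻`. In a relation `∑ j, p_j y ^ j = 0` evaluated at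
`x / ρ`, the `j`-th term thus has order `(1 - x) ^ (m_j - j β)`, with `m_j` the multiplicity of
`1 / ρ` as a root of `p_j`. Since `β` is irrational these exponents are pairwise distinct, so the
term with the smallest exponent dominates all the others and the sum cannot vanish.
-/

open Asymptotics Filter Finset Polynomial Topology
open scoped Nat PowerSeries

section Derivation

variable {R A : Type*} [CommRing R] [CommRing A] [Algebra R A]

theorem exists_aeval_eq_zero_and_aeval_derivative_ne_zero [IsAddTorsionFree R] [FaithfulSMul R A]
    {x : A} (hx : IsAlgebraic R x) :
    ∃ P : R[X], aeval x P = 0 ∧ aeval x (derivative P) ≠ 0 := by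
  obtain ⟨P, hP, hPx⟩ := hx
  induction hn : P.natDegree using Nat.strong_induction_on generalizing P with
  | _ n ih =>
    by_cases hP'x : aeval x (derivative P) = 0
    · have hdeg : P.natDegree ≠ 0 := fun h0 => hP <| by
        rw [eq_C_of_natDegree_eq_zero h0, aeval_C] at hPx
        rw [eq_C_of_natDegree_eq_zero h0,
          (FaithfulSMul.algebraMap_eq_zero_iff R A).1 hPx, C_0]
      exact ih _ (hn ▸ natDegree_derivative_lt hdeg) _
        (fun h => hdeg (derivative_eq_zero.1 h)) hP'x rfl
    · exact ⟨P, hPx, hP'x⟩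

variable {S : Type*} [CommRing S] [Algebra S A]

theorem isAlgebraic_derivation_aeval_sub [NoZeroDivisors R] {D : Derivation S A A} {x : A}
    (hD : ∀ r : R, IsAlgebraic R (D (algebraMap R A r))) (hx : IsAlgebraic R x) (P : R[X]) :
    IsAlgebraic R (D (aeval x P) - aeval x (derivative P) * D x) := by
  induction P using Polynomial.induction_on' with
  | add p q hp hq =>
    simp only [map_add, add_mul, add_sub_add_comm]
    exact hp.add hq
  | monomial n r =>
    have hterm : D (aeval x (monomial n r)) - aeval x (derivative (monomial n r)) * D x =
        x ^ n * D (algebraMap R A r) := by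
      simp only [aeval_monomial, derivative_monomial, Derivation.leibniz, Derivation.leibniz_pow,
        smul_eq_mul, nsmul_eq_mul, map_mul, map_natCast]
      ring
    rw [hterm]
    exact (hx.pow n).mul (hD r)

theorem isAlgebraic_derivation [NoZeroDivisors R] [IsAddTorsionFree R] [FaithfulSMul R A]
    [NoZeroDivisors A] {D : Derivation S A A}
    (hD : ∀ r : R, IsAlgebraic R (D (algebraMap R A r))) {x : A} (hx : IsAlgebraic R x) :
    IsAlgebraic R (D x) := by
  obtain ⟨P, hPx, hP'x⟩ := exists_aeval_eq_zero_and_aeval_derivative_ne_zero hx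
  have hmul := isAlgebraic_derivation_aeval_sub hD hx P
  rw [hPx, map_zero, zero_sub] at hmul
  have hP'alg : IsAlgebraic R (aeval x (derivative P)) :=
    Algebra.isAlgebraic_adjoin_singleton_iff.2 hx _ (aeval_mem_adjoin_singleton R x)
  exact .of_mul (mem_nonZeroDivisors_of_ne_zero hP'x) hP'alg (by simpa using hmul.neg)

theorem algebraMap_eq_coeToPowerSeries_ringHom :
    algebraMap R[X] R⟦X⟧ = coeToPowerSeries.ringHom :=
  RingHom.ext fun p => by simp [PowerSeries.algebraMap_apply']

theorem isAlgebraic_mk_natCast_pow_mul [IsDomain R] [CharZero R] {a : ℕ → R}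
    (ha : IsAlgebraic R[X] (PowerSeries.mk a)) (m : ℕ) :
    IsAlgebraic R[X] (PowerSeries.mk fun n => (n : R) ^ m * a n) := by
  have : FaithfulSMul R[X] R⟦X⟧ := by
    rw [faithfulSMul_iff_algebraMap_injective, algebraMap_eq_coeToPowerSeries_ringHom]
    exact Polynomial.coe_injective R
  induction m with
  | zero => simpa using ha
  | succ m ih =>
    let θ : Derivation R R⟦X⟧ R⟦X⟧ := (PowerSeries.X : R⟦X⟧) • PowerSeries.derivative R
    have hθ (p : R[X]) : θ (algebraMap R[X] R⟦X⟧ p) = algebraMap R[X] R⟦X⟧ (X * derivative p) := by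
      simp [θ, algebraMap_eq_coeToPowerSeries_ringHom, PowerSeries.derivative_coe]
    have hmk : θ (PowerSeries.mk fun n => (n : R) ^ m * a n) =
        PowerSeries.mk fun n => (n : R) ^ (m + 1) * a n := by
      ext n
      cases n with
      | zero => simp [θ]
      | succ n =>
        simp only [θ, Derivation.smul_apply, smul_eq_mul, PowerSeries.coeff_succ_X_mul,
          PowerSeries.coeff_derivative, PowerSeries.coeff_mk]
        push_cast
        ring
    exact hmk ▸ isAlgebraic_derivation (fun p => hθ p ▸ isAlgebraic_algebraMap _) ih

end Derivation

section Evaluation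

variable {𝕜 : Type*} [NormedCommRing 𝕜]

/-- The power series `f` converges absolutely at `z`, with sum `w`. Absolute convergence is
required so that products converge to the product of the sums. -/
structure HasAbsSumAt (f : 𝕜⟦X⟧) (z w : 𝕜) : Prop where
  summable_norm : Summable fun n => ‖f.coeff n * z ^ n‖
  hasSum : HasSum (fun n => f.coeff n * z ^ n) w

namespace HasAbsSumAt

variable {f g : 𝕜⟦X⟧} {z v w : 𝕜}

theorem coe (p : 𝕜[X]) (z : 𝕜) : HasAbsSumAt (p : 𝕜⟦X⟧) z (p.eval z) := by
  have hzero (n : ℕ) (hn : n ∉ p.support) : (p : 𝕜⟦X⟧).coeff n * z ^ n = 0 := by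
    rw [coeff_coe, notMem_support_iff.1 hn, zero_mul]
  refine ⟨summable_of_ne_finset_zero (s := p.support) fun n hn => by rw [hzero n hn, norm_zero], ?_⟩
  simpa only [eval_eq_sum, Polynomial.sum, coeff_coe] using hasSum_sum_of_ne_finset_zero hzero

theorem add (hf : HasAbsSumAt f z v) (hg : HasAbsSumAt g z w) : HasAbsSumAt (f + g) z (v + w) := by
  constructor <;> simp only [map_add, add_mul]
  · exact .of_nonneg_of_le (fun _ => norm_nonneg _) (fun _ => norm_add_le _ _)
      (hf.summable_norm.add hg.summable_norm)
  · exact hf.hasSum.add hg.hasSum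

theorem mul [CompleteSpace 𝕜] (hf : HasAbsSumAt f z v) (hg : HasAbsSumAt g z w) :
    HasAbsSumAt (f * g) z (v * w) := by
  have hcoeff (n : ℕ) : (f * g).coeff n * z ^ n =
      ∑ kl ∈ antidiagonal n, f.coeff kl.1 * z ^ kl.1 * (g.coeff kl.2 * z ^ kl.2) := by
    rw [PowerSeries.coeff_mul, sum_mul]
    refine sum_congr rfl fun kl hkl => ?_
    rw [← mem_antidiagonal.1 hkl, pow_add]
    ring
  have hsummable :=
    summable_norm_sum_mul_antidiagonal_of_summable_norm hf.summable_norm hg.summable_norm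
  refine ⟨by simpa only [hcoeff] using hsummable, ?_⟩
  rw [← hf.hasSum.tsum_eq, ← hg.hasSum.tsum_eq,
    tsum_mul_tsum_eq_tsum_sum_antidiagonal_of_summable_norm hf.summable_norm hg.summable_norm]
  simpa only [hcoeff] using hsummable.of_norm.hasSum

theorem aeval [CompleteSpace 𝕜] (hf : HasAbsSumAt f z w) (P : 𝕜[X][X]) :
    HasAbsSumAt (Polynomial.aeval f P) z (P.eval₂ (evalRingHom z) w) := by
  induction P using Polynomial.induction_on with
  | C p => simpa [algebraMap_eq_coeToPowerSeries_ringHom] using coe p z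
  | add p q hp hq => simpa only [map_add, eval₂_add] using hp.add hq
  | monomial n p h =>
    simpa only [pow_succ, ← mul_assoc, map_mul, aeval_X, eval₂_mul, eval₂_X] using h.mul hf

end HasAbsSumAt

end Evaluation

section DominantTerm

variable {ι α E : Type*} [NormedAddCommGroup E] {l : Filter α} {u : α → ℝ}

theorem isLittleO_rpow_rpow_of_lt (hu : Tendsto u l (𝓝[>] 0)) {r s : ℝ} (hrs : r < s) :
    (fun x => u x ^ s) =o[l] fun x => u x ^ r := by
  have hpos : ∀ᶠ x in l, 0 < u x := hu self_mem_nhdsWithin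
  rw [isLittleO_iff_tendsto' (hpos.mono fun x hx h0 => absurd h0 (Real.rpow_pos_of_pos hx r).ne')]
  have hlim : Tendsto (fun x => u x ^ (s - r)) l (𝓝 0) :=
    (Real.zero_rpow (sub_pos.2 hrs).ne' ▸
      (Real.continuousAt_rpow_const 0 (s - r) (.inr (sub_pos.2 hrs).le)).tendsto).comp
      (tendsto_nhds_of_tendsto_nhdsWithin hu)
  exact hlim.congr' (hpos.mono fun x hx => Real.rpow_sub hx s r)

theorem isTheta_sum_of_isTheta_rpow (hu : Tendsto u l (𝓝[>] 0)) {s : Finset ι} {f : ι → α → E}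
    {e : ι → ℝ} (hf : ∀ j ∈ s, f j =Θ[l] fun x => u x ^ e j) {k : ι} (hk : k ∈ s)
    (hlt : ∀ j ∈ s, j ≠ k → e k < e j) :
    (fun x => ∑ j ∈ s, f j x) =Θ[l] fun x => u x ^ e k := by
  classical
  have hrest : (fun x => ∑ j ∈ s.erase k, f j x) =o[l] fun x => u x ^ e k :=
    IsLittleO.fun_sum fun j hj => (hf j (mem_of_mem_erase hj)).trans_isLittleO
      (isLittleO_rpow_rpow_of_lt hu (hlt j (mem_of_mem_erase hj) (ne_of_mem_erase hj)))
  simp_rw [← add_sum_erase s _ hk]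
  exact (hf k hk).add_isLittleO hrest

theorem isTheta_eval_rootMultiplicity {𝕜 : Type*} [NormedField 𝕜] {p : 𝕜[X]} (hp : p ≠ 0)
    (ζ : 𝕜) : (fun z => p.eval z) =Θ[𝓝 ζ] fun z => (z - ζ) ^ p.rootMultiplicity ζ := by
  set q := p /ₘ (X - C ζ) ^ p.rootMultiplicity ζ with hq
  have hfactor (z : 𝕜) : p.eval z = (z - ζ) ^ p.rootMultiplicity ζ * q.eval z := by
    conv_lhs => rw [← pow_mul_divByMonic_rootMultiplicity_eq p ζ, ← hq]
    simp
  have hqζ : q.eval ζ ≠ 0 := eval_divByMonic_pow_rootMultiplicity_ne_zero ζ hp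
  have hqΘ : (fun z => q.eval z) =Θ[𝓝 ζ] fun _ => (1 : 𝕜) :=
    (((isEquivalent_const_iff_tendsto hqζ).2 q.continuous.continuousAt).isTheta).trans
      (isTheta_const_const hqζ one_ne_zero)
  simpa only [hfactor, mul_one] using (isTheta_refl _ _).mul hqΘ

theorem eventually_eval₂_ne_zero_of_isTheta_rpow {𝕜 : Type*} [NormedField 𝕜] {P : 𝕜[X][X]}
    (hP : P ≠ 0) {z y : α → 𝕜} {ζ : 𝕜} {β : ℝ} (hβ : Irrational β)
    (hu : Tendsto u l (𝓝[>] 0)) (hz : (fun x => z x - ζ) =Θ[l] u)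
    (hy : y =Θ[l] fun x => u x ^ β) :
    ∀ᶠ x in l, P.eval₂ (evalRingHom (z x)) (y x) ≠ 0 := by
  have hpos : ∀ᶠ x in l, 0 < u x := hu self_mem_nhdsWithin
  have hzζ : Tendsto z l (𝓝 ζ) := tendsto_sub_nhds_zero_iff.1 <|
    hz.tendsto_zero_iff.2 (tendsto_nhds_of_tendsto_nhdsWithin hu)
  let m (j : ℕ) : ℕ := (P.coeff j).rootMultiplicity ζ
  let e (j : ℕ) : ℝ := m j + β * j
  have he : Function.Injective e := fun i j hij => by
    by_contra hne
    have hsub : (i : ℤ) - j ≠ 0 := sub_ne_zero.2 (by exact_mod_cast hne)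
    refine (hβ.mul_intCast hsub).ne_int ((m j : ℤ) - m i) ?_
    push_cast
    linarith
  have hterm (j : ℕ) (hj : j ∈ P.support) :
      (fun x => (P.coeff j).eval (z x) * y x ^ j) =Θ[l] fun x => u x ^ e j := by
    have hcoeff : (fun x => (P.coeff j).eval (z x)) =Θ[l] fun x => u x ^ m j :=
      have hΘ := isTheta_eval_rootMultiplicity (mem_support_iff.1 hj) ζ
      IsTheta.trans ⟨hΘ.1.comp_tendsto hzζ, hΘ.2.comp_tendsto hzζ⟩ (hz.pow (m j))
    refine (hcoeff.mul (hy.pow j)).trans_eventuallyEq (hpos.mono fun x hx => ?_)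
    change u x ^ m j * (u x ^ β) ^ j = u x ^ ((m j : ℝ) + β * j)
    rw [Real.rpow_add hx, Real.rpow_natCast, Real.rpow_mul hx.le, Real.rpow_natCast]
  obtain ⟨k, hk, hmin⟩ := P.support.exists_min_image e (support_nonempty.2 hP)
  have hsum := isTheta_sum_of_isTheta_rpow hu hterm hk fun j hj hjk =>
    (hmin j hj).lt_of_ne (he.ne hjk.symm)
  filter_upwards [hsum.eq_zero_iff, hpos] with x hx hx0
  rw [eval₂_eq_sum, Polynomial.sum]
  exact hx.not.2 (Real.rpow_pos_of_pos hx0 _).ne'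

end DominantTerm

section BinomialSeries

theorem ascPochhammer_eval_eq_prod_range {R : Type*} [CommSemiring R] (r : R) (n : ℕ) :
    (ascPochhammer R n).eval r = ∏ j ∈ range n, (r + j) := by
  induction n with
  | zero => simp
  | succ n ih => rw [ascPochhammer_succ_eval, prod_range_succ, ih]

theorem multichoose_eq_prod_div_factorial {F : Type*} [Field F] [CharZero F] [BinomialRing F]
    (β : F) (n : ℕ) :
    Ring.multichoose β n = (∏ j ∈ range n, (β + j)) / n ! := by
  rw [eq_div_iff (Nat.cast_ne_zero.2 n.factorial_ne_zero), mul_comm, ← nsmul_eq_mul,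
    Ring.factorial_nsmul_multichoose_eq_ascPochhammer, ascPochhammer_smeval_eq_eval,
    ascPochhammer_eval_eq_prod_range]

theorem hasSum_pow_mul_multichoose (β : ℝ) {x : ℝ} (hx : |x| < 1) :
    HasSum (fun n => x ^ n * Ring.multichoose β n) ((1 - x) ^ (-β)) := by
  have hsum := (Real.one_div_one_sub_rpow_hasFPowerSeriesOnBall_zero β).hasSum (y := x)
    (by simpa [enorm_eq_nnnorm, ← NNReal.coe_lt_coe] using hx)
  have hchoose (n : ℕ) : Ring.choose (β + n - 1) n = Ring.multichoose β n := by
    rw [Ring.choose, show β + n - 1 - n + 1 = β by ring]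
  have hx1 : 0 ≤ 1 - x := by linarith [(abs_lt.1 hx).2]
  simpa only [FormalMultilinearSeries.ofScalars_apply_eq, hchoose, smul_eq_mul, zero_add, one_div,
    Real.rpow_neg hx1, mul_comm] using hsum

theorem rpow_isEquivalent_Gamma_mul_multichoose {β : ℝ} (hβ : ∀ m : ℕ, β ≠ -m) :
    (fun n : ℕ => (n : ℝ) ^ (β - 1)) ~[atTop] fun n => Real.Gamma β * Ring.multichoose β n := by
  have hΓ : Real.Gamma β ≠ 0 := Real.Gamma_ne_zero hβ
  have hβn (n : ℕ) : β + n ≠ 0 := fun h => hβ n (eq_neg_of_add_eq_zero_left h)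
  have hratio : Tendsto (fun n : ℕ => Real.GammaSeq β n / Real.Gamma β * (1 + β / n)) atTop
      (𝓝 1) := by
    simpa [hΓ] using ((Real.GammaSeq_tendsto_Gamma β).div_const (Real.Gamma β)).mul
      ((tendsto_const_div_atTop_nhds_zero_nat β).const_add 1)
  refine isEquivalent_of_tendsto_one (hratio.congr' ?_)
  filter_upwards [eventually_gt_atTop 0] with n hn
  have hprod : ∏ j ∈ range n, (β + j) ≠ 0 := prod_ne_zero_iff.2 fun j _ => hβn j
  have hn0 : (n : ℝ) ≠ 0 := by exact_mod_cast hn.ne'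
  have := hβn n
  rw [Pi.div_apply, Real.GammaSeq, prod_range_succ, multichoose_eq_prod_div_factorial,
    Real.rpow_sub_one hn0]
  field_simp
  ring

end BinomialSeries

section Abelian

variable {E : Type*} [NormedAddCommGroup E] [NormedSpace ℝ E]

theorem isTheta_smul_const {α : Type*} {l : Filter α} {f : α → ℝ} {c : E} (hc : c ≠ 0) :
    (fun x => f x • c) =Θ[l] f := by
  simpa only [smul_eq_mul, mul_one] using
    (isTheta_refl f l).smul (isTheta_const_const (l := l) hc (one_ne_zero' ℝ))

theorem isLittleO_tsum_pow_smul {e : ℕ → E} {v : ℕ → ℝ} (hv : ∀ n, 0 ≤ v n)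
    (hsum : ∀ x ∈ Set.Ioo (0 : ℝ) 1, Summable fun n => x ^ n * v n)
    (htop : Tendsto (fun x : ℝ => ∑' n, x ^ n * v n) (𝓝[<] 1) atTop) (he : e =o[atTop] v) :
    (fun x : ℝ => ∑' n, x ^ n • e n) =o[𝓝[<] 1] fun x => ∑' n, x ^ n * v n := by
  refine isLittleO_iff.2 fun c hc => ?_
  obtain ⟨N, hN⟩ := eventually_atTop.1 (he.def (half_pos hc))
  let B := ∑ n ∈ range N, ‖e n‖
  filter_upwards [Ioo_mem_nhdsLT one_pos, htop.eventually_ge_atTop (B / (c / 2)),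
    htop.eventually_ge_atTop 0] with x hx hB hpos
  have hhead : HasSum (fun n => if n ∈ range N then ‖e n‖ else 0) B := by
    simpa only [B, sum_ite_mem, inter_self] using
      hasSum_sum_of_ne_finset_zero (f := fun n => if n ∈ range N then ‖e n‖ else 0)
        fun n hn => if_neg hn
  have hbound (n : ℕ) :
      ‖x ^ n • e n‖ ≤ (if n ∈ range N then ‖e n‖ else 0) + c / 2 * (x ^ n * v n) := by
    have hxn : 0 ≤ x ^ n := pow_nonneg hx.1.le n
    have hterm : 0 ≤ c / 2 * (x ^ n * v n) := mul_nonneg (half_pos hc).le (mul_nonneg hxn (hv n))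
    rw [norm_smul, Real.norm_of_nonneg hxn]
    split_ifs with hn
    · linarith [mul_le_of_le_one_left (norm_nonneg (e n)) (pow_le_one₀ (n := n) hx.1.le hx.2.le)]
    · have hen := hN n (by simpa using hn)
      rw [Real.norm_of_nonneg (hv n)] at hen
      linarith [mul_le_mul_of_nonneg_left hen hxn]
  calc ‖∑' n, x ^ n • e n‖ ≤ B + c / 2 * ∑' n, x ^ n * v n :=
        tsum_of_norm_bounded (hhead.add ((hsum x hx).hasSum.mul_left (c / 2))) hbound
    _ ≤ c / 2 * (∑' n, x ^ n * v n) + c / 2 * ∑' n, x ^ n * v n := by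
        gcongr
        rwa [div_le_iff₀' (half_pos hc)] at hB
    _ = c * ‖∑' n, x ^ n * v n‖ := by rw [Real.norm_of_nonneg hpos]; ring

theorem summable_norm_pow_smul_of_isBigO {a : ℕ → E} {v : ℕ → ℝ} (ha : a =O[atTop] v) {x : ℝ}
    (hv : Summable fun n => x ^ n * v n) : Summable fun n => ‖x ^ n • a n‖ :=
  summable_of_isBigO_nat hv ((isBigO_refl (fun n => x ^ n) atTop).smul ha).norm_left

theorem summable_norm_pow_smul_of_isBigO_rpow {a : ℕ → E} {s : ℝ}
    (ha : a =O[atTop] fun n => (n : ℝ) ^ s) {x : ℝ} (hx : |x| < 1) :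
    Summable fun n => ‖x ^ n • a n‖ := by
  have hpow : (fun n : ℕ => (n : ℝ) ^ s) =O[atTop] fun n => (n : ℝ) ^ ⌈s⌉₊ := by
    refine .of_bound' ((eventually_ge_atTop 1).mono fun n hn => ?_)
    rw [← Real.rpow_natCast, Real.norm_of_nonneg (by positivity),
      Real.norm_of_nonneg (by positivity)]
    exact Real.rpow_le_rpow_of_exponent_le (by exact_mod_cast hn) (Nat.le_ceil s)
  exact summable_norm_pow_smul_of_isBigO (ha.trans hpow) <| by
    simpa only [mul_comm] using summable_pow_mul_geometric_of_norm_lt_one (R := ℝ) ⌈s⌉₊ hx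

theorem tsum_pow_smul_isEquivalent [CompleteSpace E] {a : ℕ → E} {b : E} (hb : b ≠ 0)
    {v : ℕ → ℝ} (hv : ∀ n, 0 ≤ v n)
    (hsum : ∀ x ∈ Set.Ioo (0 : ℝ) 1, Summable fun n => x ^ n * v n)
    (htop : Tendsto (fun x : ℝ => ∑' n, x ^ n * v n) (𝓝[<] 1) atTop)
    (ha : a ~[atTop] fun n => v n • b) :
    (fun x : ℝ => ∑' n, x ^ n • a n) ~[𝓝[<] 1] fun x => (∑' n, x ^ n * v n) • b := by
  have herr : (fun n => a n - v n • b) =o[atTop] v :=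
    ha.isLittleO.trans_isBigO (isTheta_smul_const hb).1
  refine ((isLittleO_tsum_pow_smul hv hsum htop herr).trans_isTheta
    (isTheta_smul_const hb).symm).congr' ?_ .rfl
  filter_upwards [Ioo_mem_nhdsLT one_pos] with x hx
  have hsuma : Summable fun n => x ^ n • a n :=
    (summable_norm_pow_smul_of_isBigO (ha.isBigO.trans (isTheta_smul_const hb).1)
      (hsum x hx)).of_norm
  have hvb := (hsum x hx).hasSum.smul_const b
  simp only [smul_sub, smul_smul, Pi.sub_apply]
  rw [hsuma.tsum_sub hvb.summable, hvb.tsum_eq]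

theorem isEquivalent_multichoose_smul {a : ℕ → E} {c : E} {β : ℝ} (hβ : ∀ m : ℕ, β ≠ -m)
    (ha : a ~[atTop] fun n => (n : ℝ) ^ (β - 1) • c) :
    a ~[atTop] fun n => Ring.multichoose β n • (Real.Gamma β • c) := by
  refine ha.trans (((rpow_isEquivalent_Gamma_mul_multichoose hβ).smul .refl).congr_right ?_)
  exact .of_forall fun n => by simp only [smul_smul, mul_comm]

theorem tendsto_one_sub_nhdsLT_one : Tendsto (fun x : ℝ => 1 - x) (𝓝[<] 1) (𝓝[>] 0) :=
  tendsto_nhdsWithin_iff.2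
    ⟨(Continuous.tendsto' (by fun_prop) 1 0 (sub_self 1)).mono_left nhdsWithin_le_nhds,
      eventually_mem_nhdsWithin.mono fun _ hx => Set.mem_Ioi.2 (sub_pos.2 hx)⟩

theorem tsum_pow_smul_isEquivalent_rpow_neg [CompleteSpace E] {a : ℕ → E} {c : E} (hc : c ≠ 0)
    {β : ℝ} (hβ : 0 < β) (ha : a ~[atTop] fun n => (n : ℝ) ^ (β - 1) • c) :
    (fun x : ℝ => ∑' n, x ^ n • a n) ~[𝓝[<] 1]
      fun x => (1 - x) ^ (-β) • (Real.Gamma β • c) := by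
  have hsum (x : ℝ) (hx : x ∈ Set.Ioo (0 : ℝ) 1) :
      HasSum (fun n => x ^ n * Ring.multichoose β n) ((1 - x) ^ (-β)) :=
    hasSum_pow_mul_multichoose β (abs_lt.2 ⟨by linarith [hx.1], hx.2⟩)
  have heq : (fun x : ℝ => ∑' n, x ^ n * Ring.multichoose β n) =ᶠ[𝓝[<] 1]
      fun x => (1 - x) ^ (-β) := by
    filter_upwards [Ioo_mem_nhdsLT one_pos] with x hx using (hsum x hx).tsum_eq
  have hβm (m : ℕ) : β ≠ -m := by linarith [(Nat.cast_nonneg m : (0 : ℝ) ≤ m)]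
  have hnonneg (n : ℕ) : 0 ≤ Ring.multichoose β n := by
    rw [multichoose_eq_prod_div_factorial]
    positivity
  have htop := ((tendsto_rpow_neg_nhdsGT_zero (neg_lt_zero.2 hβ)).comp
    tendsto_one_sub_nhdsLT_one).congr' heq.symm
  exact (tsum_pow_smul_isEquivalent (smul_ne_zero (Real.Gamma_pos_of_pos hβ).ne' hc) hnonneg
    (fun x hx => (hsum x hx).summable) htop (isEquivalent_multichoose_smul hβm ha)).congr_right
    (heq.mono fun x hx => congrArg (· • (Real.Gamma β • c)) hx)

end Abelian

section Transcendence

variable {𝕜 : Type*} [RCLike 𝕜] {a : ℕ → 𝕜}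

theorem hasAbsSumAt_mk_smul {ζ : 𝕜} {x : ℝ} (ha : Summable fun n => ‖x ^ n • (ζ ^ n * a n)‖) :
    HasAbsSumAt (PowerSeries.mk a) (x • ζ) (∑' n, x ^ n • (ζ ^ n * a n)) := by
  have hterm (n : ℕ) : (PowerSeries.mk a).coeff n * (x • ζ) ^ n = x ^ n • (ζ ^ n * a n) := by
    rw [PowerSeries.coeff_mk, _root_.smul_pow, mul_smul_comm, mul_comm]
  constructor <;> simp only [hterm]
  exacts [ha, ha.of_norm.hasSum]

theorem not_isAlgebraic_mk_of_isEquivalent_rpow_smul {c ζ : 𝕜} {β : ℝ} (hc : c ≠ 0) (hζ : ζ ≠ 0)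
    (hβ : Irrational β) (hβpos : 0 < β)
    (ha : (fun n => ζ ^ n * a n) ~[atTop] fun n => (n : ℝ) ^ (β - 1) • c) :
    ¬ IsAlgebraic 𝕜[X] (PowerSeries.mk a) := by
  rintro ⟨P, hP, hPa⟩
  let y (x : ℝ) : 𝕜 := ∑' n, x ^ n • (ζ ^ n * a n)
  have hy : y =Θ[𝓝[<] 1] fun x => (1 - x) ^ (-β) :=
    (tsum_pow_smul_isEquivalent_rpow_neg hc hβpos ha).isTheta.trans
      (isTheta_smul_const (smul_ne_zero (Real.Gamma_pos_of_pos hβpos).ne' hc))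
  have hz : (fun x : ℝ => x • ζ - ζ) =Θ[𝓝[<] 1] fun x => 1 - x := by
    have hsub (x : ℝ) : x • ζ - ζ = (1 - x) • -ζ := by
      rw [smul_neg, sub_smul, one_smul, neg_sub]
    simpa only [hsub] using isTheta_smul_const (neg_ne_zero.2 hζ)
  have hev := eventually_eval₂_ne_zero_of_isTheta_rpow hP hβ.neg tendsto_one_sub_nhdsLT_one hz hy
  obtain ⟨x, hx, hne⟩ := ((eventually_mem_set.2 (Ioo_mem_nhdsLT one_pos)).and hev).exists
  have hsum : Summable fun n => ‖x ^ n • (ζ ^ n * a n)‖ :=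
    summable_norm_pow_smul_of_isBigO_rpow (ha.isBigO.trans (isTheta_smul_const hc).1)
      (abs_lt.2 ⟨by linarith [hx.1], hx.2⟩)
  have hPsum := ((hasAbsSumAt_mk_smul hsum).aeval P).hasSum
  simp only [hPa, map_zero, zero_mul] at hPsum
  exact hne (hPsum.unique hasSum_zero)

theorem stmt_15_general {K ρ : 𝕜} {α : ℝ} (hK : K ≠ 0) (hρ : ρ ≠ 0) (hα : Irrational α)
    (ha : a ~[atTop] fun n => (n : ℝ) ^ α • (K * ρ ^ n)) :
    ¬ IsAlgebraic 𝕜[X] (PowerSeries.mk a) := by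
  obtain ⟨k, hk⟩ := exists_nat_gt (-(α + 1))
  have hβ : Irrational (α + k + 1) := by exact_mod_cast (hα.add_natCast k).add_natCast 1
  intro halg
  refine not_isAlgebraic_mk_of_isEquivalent_rpow_smul hK (inv_ne_zero hρ) hβ (by linarith) ?_
    (isAlgebraic_mk_natCast_pow_mul halg k)
  have hmul := (IsEquivalent.refl (u := fun n : ℕ => ρ⁻¹ ^ n * (n : 𝕜) ^ k) (l := atTop)).mul ha
  refine (hmul.congr_left (.of_forall fun n => ?_)).congr_right ?_
  · simp [mul_assoc]
  filter_upwards [eventually_gt_atTop 0] with n hn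
  have hn0 : (0 : ℝ) < n := by exact_mod_cast hn
  rw [add_sub_cancel_right, Real.rpow_add_natCast hn0.ne']
  simp only [Pi.mul_apply, RCLike.real_smul_eq_coe_mul]
  push_cast
  rw [inv_pow]
  field_simp

end Transcendence

theorem isAlgebraic_of_eval₂_mapRingHom_eq_zero {R S : Type*} [CommRing R] [CommRing S]
    [Algebra R S] [FaithfulSMul R S] {f : S⟦X⟧} {P : R[X][X]} (hP : P ≠ 0)
    (hPf : P.eval₂ (coeToPowerSeries.ringHom.comp (mapRingHom (algebraMap R S))) f = 0) :
    IsAlgebraic S[X] f := by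
  refine ⟨P.map (mapRingHom (algebraMap R S)), ?_, ?_⟩
  · have hinj := Polynomial.map_injective _ (FaithfulSMul.algebraMap_injective R S)
    rwa [Ne, Polynomial.map_eq_zero_iff hinj]
  · rwa [aeval_def, eval₂_map, algebraMap_eq_coeToPowerSeries_ringHom]

open Polynomial in
theorem stmt_15 (a : ℕ → ℝ) (K ρ α : ℝ) (hK : 0 < K) (hρ : 0 < ρ)
    (hα : Irrational α) (hα1 : α < -1)
    (hasymp : Filter.Tendsto (fun n : ℕ => a n / (K * ρ ^ n * (n : ℝ) ^ α))
      Filter.atTop (nhds 1)) :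
    ¬ ∃ P : Polynomial (Polynomial ℚ), P ≠ 0 ∧
      Polynomial.eval₂
        ((Polynomial.coeToPowerSeries.ringHom).comp (Polynomial.mapRingHom (algebraMap ℚ ℝ)))
        (PowerSeries.mk a) P = 0 := by
  rintro ⟨P, hP, hPa⟩
  refine stmt_15_general hK.ne' hρ.ne' hα (isEquivalent_of_tendsto_one ?_)
    (isAlgebraic_of_eval₂_mapRingHom_eq_zero hP hPa)
  simpa only [Pi.div_def, smul_eq_mul, mul_comm] using hasymp
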